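/- Let X be a reflexive real Banach space, let f ∈ Γ(X), and let x̄ ∈ X, ȳ* ∈ X* with ȳ* ∈ ∂f(x̄). Then ∂f is calm at x̄ for ȳ* if and only if there exist a neighborhood V of ȳ* in X* and a constant c > 0 such that f*(y*) ≥ f*(ȳ*) + ⟨y* − ȳ*, x̄⟩ + c·d(y*, ∂f(x̄))² for all y* ∈ V. Specifically, if ∂f is calm at x̄ for ȳ* with constant κ, then the conjugate growth condition holds for every c < 1/(4κ); conversely, if the conjugate growth condition holds with constant c, then ∂f is calm at x̄ for ȳ* with constant 1/c. -/

import Mathlib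

open Topology Filter Metric Set

/-- The convex subdifferential of an extended-real-valued function `f` at `x`. -/
noncomputable def subdiff {X : Type*} [NormedAddCommGroup X] [NormedSpace ℝ X]
    (f : X → EReal) (x : X) : Set (X →L[ℝ] ℝ) :=
  {p | f x ≠ ⊤ ∧ ∀ z : X, f x + ((p (z - x) : ℝ) : EReal) ≤ f z}

/-- The Fenchel conjugate `f*(p) = sup_x (⟨p, x⟩ - f(x))`. -/
noncomputable def fenchel {X : Type*} [NormedAddCommGroup X] [NormedSpace ℝ X]
    (f : X → EReal) (p : X →L[ℝ] ℝ) : EReal :=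
  ⨆ x : X, (((p x : ℝ) : EReal) - f x)

/-- `∂f` is calm at `x̄` for `ȳ*` with constant `κ`: there are neighborhoods `U` of `x̄` and
`V` of `ȳ*` with `e(∂f(x) ∩ V, ∂f(x̄)) ≤ κ·‖x - x̄‖` for all `x ∈ U` (the excess bound is
stated pointwise over `y ∈ ∂f(x) ∩ V`, matching `e(∅, D) = 0`). -/
def CalmAt {X : Type*} [NormedAddCommGroup X] [NormedSpace ℝ X]
    (f : X → EReal) (xbar : X) (ybar : X →L[ℝ] ℝ) (κ : ℝ) : Prop :=
  ∃ U ∈ 𝓝 xbar, ∃ V ∈ 𝓝 ybar, ∀ x ∈ U, ∀ y ∈ subdiff f x, y ∈ V →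
    infDist y (subdiff f xbar) ≤ κ * ‖x - xbar‖

/-- The conjugate quadratic growth condition with constant `c` on some neighborhood `V` of
`ȳ*`: `f*(y*) ≥ f*(ȳ*) + ⟨y* - ȳ*, x̄⟩ + c·d(y*, ∂f(x̄))²` for all `y* ∈ V`. -/
def ConjGrowth {X : Type*} [NormedAddCommGroup X] [NormedSpace ℝ X]
    (f : X → EReal) (xbar : X) (ybar : X →L[ℝ] ℝ) (c : ℝ) : Prop :=
  ∃ V ∈ 𝓝 ybar, ∀ y ∈ V,
    fenchel f ybar + (((y - ybar) xbar + c * (infDist y (subdiff f xbar)) ^ 2 : ℝ) : EReal)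
      ≤ fenchel f y

/-! Both conditions compare `∂f(x̄)` with the approximate subdifferentials `∂_ε f(x̄)`: since
`f*(y) ≤ ⟨y, x̄⟩ - f(x̄) + ε` iff `y ∈ ∂_ε f(x̄)`, conjugate growth says that `c·d(y, ∂f(x̄))² ≤ ε`
whenever `y ∈ ∂_ε f(x̄)` is close to `ȳ`. If `y ∈ ∂f(x)` and `z ∈ ∂f(x̄)`, then `y ∈ ∂_ε f(x̄)` with
`ε = ⟨y - z, x - x̄⟩ ≤ ‖y - z‖·‖x - x̄‖`, and the infimum over `z` turns growth into calmness.
Conversely, the Brøndsted–Rockafellar theorem approximates `y ∈ ∂_ε f(x̄)` within `d/2`, where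
`d = d(y, ∂f(x̄))`, by some `q ∈ ∂f(x)` with `‖x - x̄‖ ≤ 2ε/d`; calmness at `x` then bounds
`d ≤ d/2 + 2κε/d`, that is `ε ≥ d²/(4κ)`. -/

open scoped ENNReal NNReal

section Ekeland

variable {X : Type*} [EMetricSpace X] {φ : X → ℝ≥0∞} {ε : ℝ≥0} {x y z : X}

/-- The set of points that are below `x` in the Ekeland order of `φ` with slope `ε`. -/
def ekelandSet (φ : X → ℝ≥0∞) (ε : ℝ≥0) (x : X) : Set X :=
  {z | φ z + ε * edist x z ≤ φ x}

theorem self_mem_ekelandSet : x ∈ ekelandSet φ ε x := by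
  simp [ekelandSet]

theorem ekelandSet_subset (hy : y ∈ ekelandSet φ ε x) : ekelandSet φ ε y ⊆ ekelandSet φ ε x := by
  intro z hz
  calc φ z + ε * edist x z
      ≤ φ z + ε * (edist x y + edist y z) := by gcongr; exact edist_triangle x y z
    _ = (φ z + ε * edist y z) + ε * edist x y := by ring
    _ ≤ φ y + ε * edist x y := by gcongr; exact hz
    _ ≤ φ x := hy

theorem isClosed_ekelandSet (hφ : LowerSemicontinuous φ) : IsClosed (ekelandSet φ ε x) := by
  have hcont : Continuous fun z => (ε : ℝ≥0∞) * edist x z :=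
    (ENNReal.continuous_const_mul ENNReal.coe_ne_top).comp (by fun_prop)
  exact (hφ.add hcont.lowerSemicontinuous).isClosed_preimage (φ x)

theorem ne_top_of_mem_ekelandSet (hx : φ x ≠ ⊤) (hy : y ∈ ekelandSet φ ε x) : φ y ≠ ⊤ :=
  ne_top_of_le_ne_top hx (le_self_add.trans hy)

theorem exists_mem_ekelandSet_forall_edist_le (hε : ε ≠ 0) (hx : φ x ≠ ⊤) {δ : ℝ≥0∞}
    (hδ : δ ≠ 0) :
    ∃ w ∈ ekelandSet φ ε x, ∀ z ∈ ekelandSet φ ε w, edist w z ≤ δ := by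
  have hε' : (ε : ℝ≥0∞) ≠ 0 := by exact_mod_cast hε
  have hinf : ⨅ z ∈ ekelandSet φ ε x, φ z ≠ ⊤ :=
    ne_top_of_le_ne_top hx (iInf₂_le x self_mem_ekelandSet)
  obtain ⟨w, hw, hw_lt⟩ : ∃ w ∈ ekelandSet φ ε x,
      φ w < (⨅ z ∈ ekelandSet φ ε x, φ z) + ε * δ := by
    simpa only [iInf_lt_iff, exists_prop] using ENNReal.lt_add_right hinf (mul_ne_zero hε' hδ)
  refine ⟨w, hw, fun z hz => ?_⟩
  have hz_top := ne_top_of_mem_ekelandSet (ne_top_of_mem_ekelandSet hx hw) hz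
  have hle : φ z + ε * edist w z ≤ φ z + ε * δ :=
    calc φ z + ε * edist w z
        ≤ φ w := hz
      _ ≤ (⨅ z ∈ ekelandSet φ ε x, φ z) + ε * δ := hw_lt.le
      _ ≤ φ z + ε * δ := by gcongr; exact iInf₂_le z (ekelandSet_subset hw hz)
  exact (ENNReal.mul_le_mul_iff_right hε' ENNReal.coe_ne_top).1
    ((ENNReal.add_le_add_iff_left hz_top).1 hle)

theorem exists_seq_mem_ekelandSet (hε : ε ≠ 0) (hx : φ x ≠ ⊤) :
    ∃ u : ℕ → X, u 0 ∈ ekelandSet φ ε x ∧ (∀ n, u (n + 1) ∈ ekelandSet φ ε (u n)) ∧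
      ∀ n, ∀ z ∈ ekelandSet φ ε (u n), edist (u n) z ≤ 2⁻¹ ^ n := by
  have hnext : ∀ (n : ℕ) (w : {w // φ w ≠ ⊤}), ∃ w' : {w // φ w ≠ ⊤},
      w'.1 ∈ ekelandSet φ ε w.1 ∧ ∀ z ∈ ekelandSet φ ε w'.1, edist w'.1 z ≤ 2⁻¹ ^ n := by
    intro n w
    obtain ⟨w', hw', hsmall⟩ := exists_mem_ekelandSet_forall_edist_le hε w.2
      (pow_ne_zero n (ENNReal.inv_ne_zero.2 ENNReal.ofNat_ne_top) : (2⁻¹ : ℝ≥0∞) ^ n ≠ 0)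
    exact ⟨⟨w', ne_top_of_mem_ekelandSet w.2 hw'⟩, hw', hsmall⟩
  choose nextPt hnext_mem hnext_small using hnext
  let v : ℕ → {w // φ w ≠ ⊤} := fun n => Nat.rec ⟨x, hx⟩ nextPt n
  exact ⟨fun n => v (n + 1), hnext_mem 0 (v 0), fun n => hnext_mem (n + 1) (v (n + 1)),
    fun n => hnext_small n (v n)⟩

theorem ekeland_variational_principle [CompleteSpace X] (hφ : LowerSemicontinuous φ)
    (hε : ε ≠ 0) (hx : φ x ≠ ⊤) :
    ∃ w, φ w + ε * edist x w ≤ φ x ∧ ∀ z ≠ w, φ w < φ z + ε * edist w z := by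
  obtain ⟨u, hu_zero, hu_succ, hu_small⟩ := exists_seq_mem_ekelandSet hε hx
  have hanti : Antitone fun n => ekelandSet φ ε (u n) :=
    antitone_nat_of_succ_le fun n => ekelandSet_subset (hu_succ n)
  have hcauchy : CauchySeq u :=
    cauchySeq_of_edist_le_geometric 2⁻¹ 1 (ENNReal.inv_lt_one.2 ENNReal.one_lt_two)
      ENNReal.one_ne_top fun n => by simpa using hu_small n _ (hu_succ n)
  obtain ⟨w, hw⟩ := cauchySeq_tendsto_of_complete hcauchy
  have hw_mem : ∀ n, w ∈ ekelandSet φ ε (u n) := fun n =>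
    (isClosed_ekelandSet hφ).mem_of_tendsto hw <|
      (eventually_ge_atTop n).mono fun k hk => hanti hk self_mem_ekelandSet
  refine ⟨w, ekelandSet_subset hu_zero (hw_mem 0), fun z hzw => ?_⟩
  by_contra! hz
  have hu_edist : ∀ n, edist (u n) z ≤ 2⁻¹ ^ n := fun n =>
    hu_small n z (ekelandSet_subset (hw_mem n) hz)
  have hu_tendsto : Tendsto u atTop (𝓝 z) :=
    tendsto_iff_edist_tendsto_0.2 <| tendsto_of_tendsto_of_tendsto_of_le_of_le tendsto_const_nhds
      (ENNReal.tendsto_pow_atTop_nhds_zero_of_lt_one (ENNReal.inv_lt_one.2 ENNReal.one_lt_two))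
      (fun _ => zero_le) hu_edist
  exact hzw (tendsto_nhds_unique hu_tendsto hw)

theorem exists_ekeland_minorant_of_nonneg {X : Type*} [MetricSpace X] [CompleteSpace X]
    {g : X → EReal} (hg : LowerSemicontinuous g) (hg_nonneg : ∀ z, 0 ≤ g z) {x : X} {ε lam : ℝ}
    (hx : g x = ε) (hlam : 0 < lam) :
    ∃ (w : X) (β : ℝ), g w = β ∧ lam * dist w x ≤ ε ∧
      ∀ z, ((β - lam * dist z w : ℝ) : EReal) ≤ g z := by
  have hnonneg : ∀ {z} {γ : ℝ}, g z = γ → 0 ≤ γ := fun {z} _ h => by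
    exact_mod_cast h ▸ hg_nonneg z
  have hcost : ∀ {z} {γ : ℝ}, g z = γ → ∀ v w : X, (g z).toENNReal + lam.toNNReal * edist v w
      = ENNReal.ofReal (γ + lam * dist v w) := fun h v w => by
    rw [h, EReal.real_coe_toENNReal, edist_dist,
      ENNReal.ofReal_add (hnonneg h) (mul_nonneg hlam.le dist_nonneg),
      ENNReal.ofReal_mul hlam.le, ENNReal.ofReal]
    rfl
  obtain ⟨w, hw, hmin⟩ := ekeland_variational_principle (φ := fun z => (g z).toENNReal)
    (EReal.continuous_toENNReal.comp_lowerSemicontinuous hg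
      fun _ _ => EReal.toENNReal_le_toENNReal)
    (Real.toNNReal_pos.2 hlam).ne' (x := x) (by simp [hx])
  have hw_top : g w ≠ ⊤ := EReal.toENNReal_ne_top_iff.1 <|
    ne_top_of_le_ne_top (by simp [hx]) (le_self_add.trans hw)
  have hβ : g w = (g w).toReal :=
    (EReal.coe_toReal hw_top (EReal.bot_lt_zero.trans_le (hg_nonneg w)).ne').symm
  refine ⟨w, _, hβ, ?_, fun z => ?_⟩
  · rw [hcost hβ, hx, EReal.real_coe_toENNReal, ENNReal.ofReal_le_ofReal_iff (hnonneg hx)] at hw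
    rw [dist_comm]
    linarith [hnonneg hβ]
  · rcases eq_or_ne z w with rfl | hzw
    · simpa using hβ.ge
    have hlt := hmin z hzw
    induction hz : g z with
    | bot => simpa [hz] using hg_nonneg z
    | top => exact le_top
    | coe γ =>
      rw [hcost hz, hβ, EReal.real_coe_toENNReal] at hlt
      have := (ENNReal.ofReal_lt_ofReal_iff').1 hlt
      rw [dist_comm]
      exact EReal.coe_le_coe_iff.2 (by linarith [this.1])

end Ekeland

section Separation

theorem convex_epigraph_of_convex_ineq {E : Type*} [AddCommGroup E] [Module ℝ E] {f : E → EReal}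
    (hf : ∀ x y : E, ∀ a b : ℝ, 0 ≤ a → 0 ≤ b → a + b = 1 →
      f (a • x + b • y) ≤ (a : EReal) * f x + (b : EReal) * f y) :
    Convex ℝ {p : E × ℝ | f p.1 ≤ p.2} := by
  rintro ⟨x, s⟩ hx ⟨y, t⟩ hy a b ha hb hab
  calc f (a • x + b • y)
      ≤ a * f x + b * f y := hf x y a b ha hb hab
    _ ≤ a * s + b * t := add_le_add
        (mul_le_mul_of_nonneg_left hx (EReal.coe_nonneg.2 ha))
        (mul_le_mul_of_nonneg_left hy (EReal.coe_nonneg.2 hb))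
    _ = ((a • s + b • t : ℝ) : EReal) := by simp

theorem exists_affine_between {E : Type*} [TopologicalSpace E] [AddCommGroup E]
    [IsTopologicalAddGroup E] [Module ℝ E] [ContinuousSMul ℝ E] {g : E → ℝ} {f : E → EReal}
    (hg : ConcaveOn ℝ univ g) (hg_cont : Continuous g) (hf : Convex ℝ {p : E × ℝ | f p.1 ≤ p.2})
    (hgf : ∀ z, (g z : EReal) ≤ f z) (hdom : ∃ z, f z ≠ ⊤) :
    ∃ (q : E →L[ℝ] ℝ) (c : ℝ), ∀ z, g z ≤ q z + c ∧ ((q z + c : ℝ) : EReal) ≤ f z := by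
  have hconv : Convex ℝ {p : E × ℝ | p.2 < g p.1} := by simpa using hg.convex_strict_hypograph
  have hopen : IsOpen {p : E × ℝ | p.2 < g p.1} :=
    isOpen_lt continuous_snd (hg_cont.comp continuous_fst)
  have hdisj : Disjoint {p : E × ℝ | p.2 < g p.1} {p : E × ℝ | f p.1 ≤ p.2} :=
    disjoint_left.2 fun p hlt hle =>
      hlt.not_ge (EReal.coe_le_coe_iff.1 ((hgf p.1).trans hle))
  obtain ⟨F, s, hF_hypo, hF_epi⟩ := geometric_hahn_banach_open hconv hopen hf hdisj
  set ℓ : E →L[ℝ] ℝ := F.comp (.inl ℝ E ℝ)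
  set a : ℝ := F (0, 1)
  have hF : ∀ z t, F (z, t) = ℓ z + a * t := fun z t => by
    calc F (z, t) = F ((z, 0) + t • (0, 1)) := by simp
      _ = ℓ z + a * t := by rw [map_add, map_smul, smul_eq_mul, mul_comm]; rfl
  have hbelow : ∀ z, ∀ t < g z, ℓ z + a * t < s := fun z t ht => hF z t ▸ hF_hypo (z, t) ht
  have habove : ∀ z (t : ℝ), f z ≤ t → s ≤ ℓ z + a * t := fun z t ht => hF z t ▸ hF_epi (z, t) ht
  have ha : 0 < a := by
    obtain ⟨z, hz⟩ := hdom
    have hlt : a * (g z - 1) < a * (f z).toReal := lt_of_add_lt_add_left <|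
      (hbelow z (g z - 1) (by linarith)).trans_le (habove z _ (EReal.le_coe_toReal hz))
    have hle : g z ≤ (f z).toReal :=
      EReal.coe_le_coe_iff.1 ((hgf z).trans (EReal.le_coe_toReal hz))
    exact pos_of_right_mul_lt_le hlt (by linarith)
  refine ⟨-a⁻¹ • ℓ, a⁻¹ * s, fun z => ⟨?_, ?_⟩⟩
  · refine le_of_forall_lt_imp_le_of_dense fun t ht => ?_
    have := hbelow z t ht
    simp only [smul_apply, smul_eq_mul]
    field_simp
    linarith
  · refine EReal.le_of_forall_lt_iff_le.1 fun t ht => EReal.coe_le_coe_iff.2 ?_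
    have := habove z t ht.le
    simp only [smul_apply, smul_eq_mul]
    field_simp
    linarith

end Separation

section Subdifferential

variable {X : Type*} [NormedAddCommGroup X] [NormedSpace ℝ X] {f : X → EReal} {x x' : X}
  {y z : X →L[ℝ] ℝ} {α ε lam : ℝ}

/-- The `ε`-subdifferential `∂_ε f(x)`, whose elements are the slopes of the affine minorants of
`f` that are within `ε` of `f` at `x`. -/
def epsSubdiff (f : X → EReal) (ε : ℝ) (x : X) : Set (X →L[ℝ] ℝ) :=
  {p | f x ≠ ⊤ ∧ ∀ z : X, f x + ((p (z - x) - ε : ℝ) : EReal) ≤ f z}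

theorem epsSubdiff_zero : epsSubdiff f 0 x = subdiff f x := by
  simp [epsSubdiff, subdiff]

theorem nonneg_of_mem_epsSubdiff (hα : f x = α) (hy : y ∈ epsSubdiff f ε x) : 0 ≤ ε := by
  have h := hy.2 x
  rw [hα, ← EReal.coe_add, EReal.coe_le_coe_iff, sub_self, map_zero] at h
  linarith

theorem fenchel_le_coe_iff {r : ℝ} :
    fenchel f y ≤ r ↔ ∀ z, ((y z - r : ℝ) : EReal) ≤ f z := by
  refine iSup_le_iff.trans (forall_congr' fun z => ?_)
  induction f z with
  | bot => simpa using EReal.coe_ne_bot (y z - r)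
  | top => simp
  | coe β => norm_cast; exact sub_le_comm

theorem mem_epsSubdiff_iff_fenchel_le (hα : f x = α) :
    y ∈ epsSubdiff f ε x ↔ fenchel f y ≤ ((y x - α + ε : ℝ) : EReal) := by
  have hshift : ∀ z, α + (y (z - x) - ε) = y z - (y x - α + ε) := fun z => by
    rw [map_sub]; ring
  simp only [epsSubdiff, mem_ofPred_eq, hα, fenchel_le_coe_iff, ← EReal.coe_add, hshift, ne_eq,
    EReal.coe_ne_top, not_false_eq_true, true_and]

theorem fenchel_eq_of_mem_subdiff (hα : f x = α) (hy : y ∈ subdiff f x) :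
    fenchel f y = ((y x - α : ℝ) : EReal) := by
  have hy_zero : y ∈ epsSubdiff f 0 x := by rwa [epsSubdiff_zero]
  refine le_antisymm ?_ ?_
  · simpa using (mem_epsSubdiff_iff_fenchel_le hα).1 hy_zero
  · exact (by simp [hα] : _ = ((y x : ℝ) : EReal) - f x).trans_le
      (le_iSup (fun w => ((y w : ℝ) : EReal) - f w) x)

theorem mem_epsSubdiff_of_mem_subdiff (hy : y ∈ subdiff f x') (hz : z ∈ subdiff f x) :
    y ∈ epsSubdiff f ((y - z) (x' - x)) x := by
  refine ⟨hz.1, fun w => ?_⟩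
  have hsplit : y (w - x) - (y - z) (x' - x) = z (x' - x) + y (w - x') := by
    simp only [map_sub, sub_apply]; ring
  calc f x + ((y (w - x) - (y - z) (x' - x) : ℝ) : EReal)
      = f x + ((z (x' - x) : ℝ) : EReal) + ((y (w - x') : ℝ) : EReal) := by
        rw [hsplit, EReal.coe_add, add_assoc]
    _ ≤ f x' + ((y (w - x') : ℝ) : EReal) := by gcongr; exact hz.2 x'
    _ ≤ f w := hy.2 w

theorem exists_mem_subdiff_norm_sub_le (hf : Convex ℝ {p : X × ℝ | f p.1 ≤ p.2}) (hα : f x = α)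
    (hlam : 0 ≤ lam) (hy : ∀ z, ((α + y (z - x) - lam * ‖z - x‖ : ℝ) : EReal) ≤ f z) :
    ∃ q ∈ subdiff f x, ‖q - y‖ ≤ lam := by
  have hconcave : ConcaveOn ℝ univ fun z => α + y (z - x) - lam * ‖z - x‖ := by
    have hnorm := (convexOn_univ_dist x).smul hlam
    have haff := (y.toLinearMap.concaveOn convex_univ).add_const (α - y x)
    refine (haff.sub hnorm).congr fun z _ => ?_
    simp only [Pi.sub_apply, Pi.add_apply, ContinuousLinearMap.coe_coe, dist_eq_norm, smul_eq_mul,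
      map_sub]
    ring
  obtain ⟨q, c, hq⟩ :=
    exists_affine_between hconcave (by fun_prop) hf hy ⟨x, hα ▸ EReal.coe_ne_top α⟩
  have hc : q x + c = α := le_antisymm
    (EReal.coe_le_coe_iff.1 (hα ▸ (hq x).2)) (by simpa using (hq x).1)
  refine ⟨q, ⟨hα ▸ EReal.coe_ne_top α, fun z => ?_⟩, ?_⟩
  · have hval : α + q (z - x) = q z + c := by rw [map_sub]; linarith
    rw [hα, ← EReal.coe_add, hval]
    exact (hq z).2
  · have hlower : ∀ u, -(lam * ‖u‖) ≤ (q - y) u := fun u => by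
      have h := (hq (x + u)).1
      simp only [add_sub_cancel_left, map_add] at h
      rw [sub_apply]
      linarith
    refine (q - y).opNorm_le_bound hlam fun u => abs_le.2 ⟨hlower u, ?_⟩
    have h := hlower (-u)
    rw [map_neg, norm_neg] at h
    linarith

theorem exists_perturbed_minorant [CompleteSpace X] (hlsc : LowerSemicontinuous f)
    (hα : f x = α) (hlam : 0 < lam) (hy : y ∈ epsSubdiff f ε x) :
    ∃ (w : X) (β : ℝ), f w = β ∧ lam * ‖w - x‖ ≤ ε ∧
      ∀ z, ((β + y (z - w) - lam * ‖z - w‖ : ℝ) : EReal) ≤ f z := by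
  let shift : X → ℝ := fun z => ε - α - y (z - x)
  have hlsc_shift : LowerSemicontinuous fun z => f z + (shift z : EReal) :=
    hlsc.add' (continuous_coe_real_ereal.comp (by fun_prop)).lowerSemicontinuous fun z =>
      EReal.continuousAt_add (.inr (EReal.coe_ne_bot _)) (.inr (EReal.coe_ne_top _))
  have hshift_nonneg : ∀ z, 0 ≤ f z + (shift z : EReal) := fun z =>
    calc (0 : EReal) = f x + ((y (z - x) - ε : ℝ) : EReal) + (shift z : EReal) := by
          rw [hα]
          norm_cast
          simp only [shift]
          ring
      _ ≤ f z + (shift z : EReal) := by gcongr; exact hy.2 z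
  obtain ⟨w, β, hβ, hwx, hmin⟩ :=
    exists_ekeland_minorant_of_nonneg hlsc_shift hshift_nonneg (x := x) (ε := ε)
      (by rw [hα, ← EReal.coe_add]; simp [shift]) hlam
  refine ⟨w, β - shift w, ?_, dist_eq_norm w x ▸ hwx, fun z => ?_⟩
  · rw [EReal.coe_sub, ← hβ, EReal.add_sub_cancel_right]
  · have hval : β - shift w + y (z - w) - lam * ‖z - w‖ = β - lam * dist z w - shift z := by
      simp only [shift, map_sub, dist_eq_norm]
      ring
    rw [hval, EReal.coe_sub]
    exact EReal.sub_le_of_le_add (hmin z)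

theorem brondsted_rockafellar [CompleteSpace X] (hlsc : LowerSemicontinuous f)
    (hf : Convex ℝ {p : X × ℝ | f p.1 ≤ p.2}) (hα : f x = α) (hlam : 0 < lam)
    (hy : y ∈ epsSubdiff f ε x) :
    ∃ w, lam * ‖w - x‖ ≤ ε ∧ ∃ q ∈ subdiff f w, ‖q - y‖ ≤ lam := by
  obtain ⟨w, β, hβ, hwx, hmin⟩ := exists_perturbed_minorant hlsc hα hlam hy
  exact ⟨w, hwx, exists_mem_subdiff_norm_sub_le hf hβ hlam.le hmin⟩

theorem brondsted_rockafellar_of_lt_mul_sq [CompleteSpace X] (hlsc : LowerSemicontinuous f)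
    (hf : Convex ℝ {p : X × ℝ | f p.1 ≤ p.2}) (hα : f x = α) {c d : ℝ} (hd : 0 < d)
    (hε : ε < c * d ^ 2) (hy : y ∈ epsSubdiff f ε x) :
    ∃ w, ‖w - x‖ < 2 * c * d ∧ ∃ q ∈ subdiff f w, ‖q - y‖ ≤ d / 2 := by
  obtain ⟨w, hw, hq⟩ := brondsted_rockafellar hlsc hf hα (half_pos hd) hy
  refine ⟨w, lt_of_mul_lt_mul_left ?_ (half_pos hd).le, hq⟩
  calc d / 2 * ‖w - x‖ ≤ ε := hw
    _ < c * d ^ 2 := hε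
    _ = d / 2 * (2 * c * d) := by ring

end Subdifferential

section Calmness

variable {X : Type*} [NormedAddCommGroup X] [NormedSpace ℝ X] {f : X → EReal} {xbar : X}
  {ybar : X →L[ℝ] ℝ} {α κ c : ℝ}

theorem conjGrowth_iff_forall_mem_epsSubdiff (hα : f xbar = α) (hybar : ybar ∈ subdiff f xbar) :
    ConjGrowth f xbar ybar c ↔ ∃ V ∈ 𝓝 ybar, ∀ y ∈ V, ∀ ε, y ∈ epsSubdiff f ε xbar →
      c * infDist y (subdiff f xbar) ^ 2 ≤ ε := by
  have hgrowth : ∀ (y : X →L[ℝ] ℝ) (r : ℝ),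
      fenchel f ybar + (((y - ybar) xbar + r : ℝ) : EReal) ≤ fenchel f y ↔
        ∀ ε, y ∈ epsSubdiff f ε xbar → r ≤ ε := by
    intro y r
    have hval : fenchel f ybar + (((y - ybar) xbar + r : ℝ) : EReal)
        = ((y xbar - α + r : ℝ) : EReal) := by
      rw [fenchel_eq_of_mem_subdiff hα hybar, ← EReal.coe_add, sub_apply]
      congr 1
      ring
    rw [hval]
    refine ⟨fun h ε hε => ?_, fun h => EReal.le_of_forall_lt_iff_le.1 fun t ht => ?_⟩
    · have := EReal.coe_le_coe_iff.1 (h.trans ((mem_epsSubdiff_iff_fenchel_le hα).1 hε))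
      linarith
    · have := h (t - (y xbar - α)) ((mem_epsSubdiff_iff_fenchel_le hα).2 (by simpa using ht.le))
      exact EReal.coe_le_coe_iff.2 (by linarith)
  simp only [ConjGrowth, hgrowth]

theorem CalmAt.conjGrowth [CompleteSpace X] (hlsc : LowerSemicontinuous f)
    (hf : Convex ℝ {p : X × ℝ | f p.1 ≤ p.2}) (hα : f xbar = α) (hybar : ybar ∈ subdiff f xbar)
    (hκ : 0 < κ) (hcalm : CalmAt f xbar ybar κ) (hc : 0 < c) (hcκ : c < 1 / (4 * κ)) :
    ConjGrowth f xbar ybar c := by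
  obtain ⟨U, hU, V, hV, hcalm⟩ := hcalm
  obtain ⟨r, hr, hrU⟩ := Metric.mem_nhds_iff.1 hU
  obtain ⟨s, hs, hsV⟩ := Metric.mem_nhds_iff.1 hV
  refine (conjGrowth_iff_forall_mem_epsSubdiff hα hybar).2
    ⟨ball ybar (min (r / (2 * c)) (s / 2)), ball_mem_nhds _ (by positivity), fun y hy ε hε => ?_⟩
  obtain ⟨hyr, hys⟩ := lt_min_iff.1 (mem_ball.1 hy)
  rw [lt_div_iff₀ (by positivity)] at hyr
  set d := infDist y (subdiff f xbar)
  have hd_nonneg : 0 ≤ d := infDist_nonneg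
  have hdy : d ≤ dist y ybar := infDist_le_dist_of_mem hybar
  by_contra! hlt
  have hd : 0 < d := by
    refine hd_nonneg.lt_of_ne' fun hzero => ?_
    rw [hzero] at hlt
    linarith [nonneg_of_mem_epsSubdiff hα hε]
  obtain ⟨w, hwx, q, hq, hqy⟩ := brondsted_rockafellar_of_lt_mul_sq hlsc hf hα hd hlt hε
  have hwU : w ∈ U := hrU <| mem_ball.2 <|
    calc dist w xbar = ‖w - xbar‖ := dist_eq_norm w xbar
      _ < 2 * c * d := hwx
      _ ≤ 2 * c * dist y ybar := by gcongr
      _ < r := by rwa [mul_comm]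
  have hqV : q ∈ V := hsV <| by
    rw [mem_ball]
    linarith [dist_triangle q y ybar, dist_eq_norm q y]
  have hd_lt : d < d :=
    calc d ≤ infDist q (subdiff f xbar) + dist y q := infDist_le_infDist_add_dist
      _ ≤ κ * ‖w - xbar‖ + d / 2 :=
        add_le_add (hcalm w hwU q hq hqV) (by rwa [dist_comm, dist_eq_norm])
      _ ≤ κ * (2 * c * d) + d / 2 := by gcongr
      _ = (c * (4 * κ)) * (d / 2) + d / 2 := by ring
      _ < 1 * (d / 2) + d / 2 := by
        gcongr
        exact (lt_div_iff₀ (by positivity)).1 hcκ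
      _ = d := by ring
  exact hd_lt.false

theorem ConjGrowth.calmAt (hα : f xbar = α) (hybar : ybar ∈ subdiff f xbar) (hc : 0 < c)
    (hgrowth : ConjGrowth f xbar ybar c) : CalmAt f xbar ybar (1 / c) := by
  obtain ⟨V, hV, hgrowth⟩ := (conjGrowth_iff_forall_mem_epsSubdiff hα hybar).1 hgrowth
  refine ⟨univ, univ_mem, V, hV, fun x _ y hy hyV => ?_⟩
  set d := infDist y (subdiff f xbar)
  have hd_nonneg : 0 ≤ d := infDist_nonneg
  have hz : ∀ z ∈ subdiff f xbar, c * d ^ 2 ≤ ‖x - xbar‖ * dist y z := fun z hz =>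
    calc c * d ^ 2 ≤ (y - z) (x - xbar) := hgrowth y hyV _ (mem_epsSubdiff_of_mem_subdiff hy hz)
      _ ≤ ‖y - z‖ * ‖x - xbar‖ := (le_abs_self _).trans ((y - z).le_opNorm _)
      _ = ‖x - xbar‖ * dist y z := by rw [dist_eq_norm, mul_comm]
  have : Nonempty (subdiff f xbar) := ⟨⟨ybar, hybar⟩⟩
  have hd_sq_le : c * d ^ 2 ≤ ‖x - xbar‖ * d :=
    calc c * d ^ 2 ≤ ⨅ z : subdiff f xbar, ‖x - xbar‖ * dist y z := le_ciInf fun z => hz z z.2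
      _ = ‖x - xbar‖ * d := by
        rw [← Real.mul_iInf_of_nonneg (norm_nonneg _), ← infDist_eq_iInf]
  rw [one_div, ← div_eq_inv_mul, le_div_iff₀ hc]
  rcases hd_nonneg.eq_or_lt with hzero | hpos
  · rw [← hzero, zero_mul]; exact norm_nonneg _
  · refine le_of_mul_le_mul_left ?_ hpos
    calc d * (d * c) = c * d ^ 2 := by ring
      _ ≤ ‖x - xbar‖ * d := hd_sq_le
      _ = d * ‖x - xbar‖ := mul_comm _ _

end Calmness

theorem stmt_12_general {X : Type*} [NormedAddCommGroup X] [NormedSpace ℝ X] [CompleteSpace X]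
    (f : X → EReal) (hlsc : LowerSemicontinuous f)
    (hconv : ∀ x y : X, ∀ a b : ℝ, 0 ≤ a → 0 ≤ b → a + b = 1 →
      f (a • x + b • y) ≤ (a : EReal) * f x + (b : EReal) * f y)
    (xbar : X) (hne_bot : f xbar ≠ ⊥) (ybar : X →L[ℝ] ℝ) (hybar : ybar ∈ subdiff f xbar) :
    ((∃ κ > (0 : ℝ), CalmAt f xbar ybar κ) ↔ (∃ c > (0 : ℝ), ConjGrowth f xbar ybar c)) ∧
    (∀ κ > (0 : ℝ), CalmAt f xbar ybar κ →
      ∀ c : ℝ, 0 < c → c < 1 / (4 * κ) → ConjGrowth f xbar ybar c) ∧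
    (∀ c > (0 : ℝ), ConjGrowth f xbar ybar c → CalmAt f xbar ybar (1 / c)) := by
  have hα : f xbar = (f xbar).toReal := (EReal.coe_toReal hybar.1 hne_bot).symm
  have hgrowth : ∀ κ > (0 : ℝ), CalmAt f xbar ybar κ →
      ∀ c : ℝ, 0 < c → c < 1 / (4 * κ) → ConjGrowth f xbar ybar c := fun κ hκ hcalm c hc hcκ =>
    hcalm.conjGrowth hlsc (convex_epigraph_of_convex_ineq hconv) hα hybar hκ hc hcκ
  have hcalm : ∀ c > (0 : ℝ), ConjGrowth f xbar ybar c → CalmAt f xbar ybar (1 / c) :=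
    fun c hc hgrowth => hgrowth.calmAt hα hybar hc
  refine ⟨⟨fun ⟨κ, hκ, h⟩ => ?_, fun ⟨c, hc, h⟩ => ⟨1 / c, by positivity, hcalm c hc h⟩⟩,
    hgrowth, hcalm⟩
  obtain ⟨c, hc, hcκ⟩ := exists_between (by positivity : 0 < 1 / (4 * κ))
  exact ⟨c, hc, hgrowth κ hκ h c hc hcκ⟩

/-- Let `X` be a reflexive Banach space, `f ∈ Γ(X)`, `ȳ* ∈ ∂f(x̄)`. Then `∂f`
is calm at `x̄` for `ȳ*` iff the conjugate quadratic growth condition holds for some `c > 0`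
on some neighborhood of `ȳ*`. Specifically, calmness with constant `κ` yields the growth
condition for every `0 < c < 1/(4κ)`, and the growth condition with constant `c` yields
calmness with constant `1/c`. -/
theorem stmt_12 {X : Type*} [NormedAddCommGroup X] [NormedSpace ℝ X] [CompleteSpace X]
    (hrefl : Function.Surjective ⇑(NormedSpace.inclusionInDoubleDual ℝ X))
    (f : X → EReal)
    (hproper : ∃ x, f x ≠ ⊤) (hne_bot : ∀ x, f x ≠ ⊥)
    (hlsc : LowerSemicontinuous f)
    (hconv : ∀ x y : X, ∀ a b : ℝ, 0 ≤ a → 0 ≤ b → a + b = 1 →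
      f (a • x + b • y) ≤ (a : EReal) * f x + (b : EReal) * f y)
    (xbar : X) (ybar : X →L[ℝ] ℝ) (hybar : ybar ∈ subdiff f xbar) :
    ((∃ κ > (0 : ℝ), CalmAt f xbar ybar κ) ↔ (∃ c > (0 : ℝ), ConjGrowth f xbar ybar c)) ∧
    (∀ κ > (0 : ℝ), CalmAt f xbar ybar κ →
      ∀ c : ℝ, 0 < c → c < 1 / (4 * κ) → ConjGrowth f xbar ybar c) ∧
    (∀ c > (0 : ℝ), ConjGrowth f xbar ybar c → CalmAt f xbar ybar (1 / c)) :=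
  stmt_12_general f hlsc hconv xbar (hne_bot xbar) ybar hybar
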